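/- Let G be a bipartite graph. If α_1 ≤ … ≤ α_d and β_1 ≤ … ≤ β_d are two multichains of basic 1-covers of G in the poset P(G) such that α_1+…+α_d = β_1+…+β_d as functions on the vertex set, then α_i = β_i for every i=1,…,d. In other words, the map sending a d-multichain of basic 1-covers to its pointwise sum is injective. -/

import Mathlib

/-!
A basic `1`-cover takes only the values `0` and `1`, and it is determined by its values on any set
`A` of vertices meeting every edge: the minimum of two basic covers that agree on `A` is again a
cover, so it equals both of them. Along a multichain, the values at a fixed vertex of `A` form a
monotone `0`-`1` sequence. Any two monotone sequences with values in the same two-element set are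
comparable, so equal sums force them to coincide.
-/

/-- A `k`-cover of a graph `G`. -/
def IsCover {n : ℕ} (G : SimpleGraph (Fin n)) (k : ℕ) (α : Fin n → ℕ) : Prop :=
  ∀ ⦃i j : Fin n⦄, G.Adj i j → k ≤ α i + α j

/-- A basic `k`-cover: a `k`-cover such that no pointwise smaller function is a `k`-cover. -/
def IsBasicCover {n : ℕ} (G : SimpleGraph (Fin n)) (k : ℕ) (α : Fin n → ℕ) : Prop :=
  IsCover G k α ∧ ∀ β : Fin n → ℕ, β ≤ α → IsCover G k β → β = α

/-- The partial order on basic 1-covers of a bipartite graph with parts `A` and `Aᶜ`. -/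
def pLe {n : ℕ} (A : Finset (Fin n)) (α β : Fin n → ℕ) : Prop :=
  ∀ a ∈ A, α a ≤ β a

section TwoValued

variable {ι α : Type*} [LinearOrder ι] [LinearOrder α] {a b : α} {f g : ι → α}

theorem le_total_of_monotone_of_mem_pair (hf : Monotone f) (hg : Monotone g)
    (hfab : ∀ i, f i ∈ ({a, b} : Set α)) (hgab : ∀ i, g i ∈ ({a, b} : Set α)) :
    f ≤ g ∨ g ≤ f := by
  by_contra! hincomp
  simp only [Pi.le_def, not_forall, not_le] at hincomp
  obtain ⟨⟨i, hi : g i < f i⟩, ⟨j, hj : f j < g j⟩⟩ := hincomp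
  have hmin : f j = g i := by grind
  have hmax : f i = g j := by grind
  rcases le_total i j with hij | hji
  · exact (hf hij).not_gt (hmin.trans_lt hi)
  · exact (hg hji).not_gt (hi.trans_eq hmax)

theorem eq_of_monotone_of_mem_pair_of_sum_eq [Fintype ι] [AddCommMonoid α]
    [IsOrderedCancelAddMonoid α] (hf : Monotone f) (hg : Monotone g)
    (hfab : ∀ i, f i ∈ ({a, b} : Set α)) (hgab : ∀ i, g i ∈ ({a, b} : Set α))
    (hsum : ∑ i, f i = ∑ i, g i) : f = g := by
  rcases le_total_of_monotone_of_mem_pair hf hg hfab hgab with hfg | hgf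
  · exact hfg.eq_of_not_lt fun hlt => (Fintype.sum_strictMono hlt).ne hsum
  · exact (hgf.eq_of_not_lt fun hlt => (Fintype.sum_strictMono hlt).ne' hsum).symm

end TwoValued

section Cover

variable {n k : ℕ} {G : SimpleGraph (Fin n)} {A : Set (Fin n)} {α β : Fin n → ℕ}

theorem IsCover.inf_const (hα : IsCover G k α) : IsCover G k (α ⊓ fun _ => k) := by
  intro i j hij
  have := hα hij
  simp only [Pi.inf_apply]
  omega

theorem IsCover.inf_of_eqOn (hA : G.IsVertexCover A) (hα : IsCover G k α) (hβ : IsCover G k β)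
    (h : Set.EqOn α β A) : IsCover G k (α ⊓ β) := by
  intro i j hij
  have hαij := hα hij
  have hβij := hβ hij
  simp only [Pi.inf_apply]
  rcases hA hij with hi | hj
  · have := h hi
    omega
  · have := h hj
    omega

theorem IsBasicCover.apply_le (hα : IsBasicCover G k α) (v : Fin n) : α v ≤ k :=
  inf_eq_left.1 (congrFun (hα.2 _ inf_le_left hα.1.inf_const) v)

theorem IsBasicCover.eq_of_eqOn (hA : G.IsVertexCover A) (hα : IsBasicCover G k α)
    (hβ : IsBasicCover G k β) (h : Set.EqOn α β A) : α = β := by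
  have hinf : IsCover G k (α ⊓ β) := hα.1.inf_of_eqOn hA hβ.1 h
  calc
    α = α ⊓ β := (hα.2 _ inf_le_left hinf).symm
    _ = β := hβ.2 _ inf_le_right hinf

theorem IsBasicCover.apply_mem_zero_one (hα : IsBasicCover G 1 α) (v : Fin n) :
    α v ∈ ({0, 1} : Set ℕ) :=
  Nat.le_one_iff_eq_zero_or_eq_one.1 (hα.apply_le v)

end Cover

theorem multichain_sum_injective_general {n : ℕ} {ι : Type*} [Fintype ι] [LinearOrder ι]
    {G : SimpleGraph (Fin n)} {A : Finset (Fin n)} (hA : G.IsVertexCover A)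
    {c c' : ι → Fin n → ℕ}
    (hbasic : ∀ i, IsBasicCover G 1 (c i)) (hbasic' : ∀ i, IsBasicCover G 1 (c' i))
    (hchain : ∀ i j, i ≤ j → pLe A (c i) (c j)) (hchain' : ∀ i j, i ≤ j → pLe A (c' i) (c' j))
    (hsum : ∀ a ∈ A, ∑ i, c i a = ∑ i, c' i a) :
    c = c' := by
  have hvalue (a : Fin n) (ha : a ∈ A) : (fun i => c i a) = fun i => c' i a :=
    eq_of_monotone_of_mem_pair_of_sum_eq
      (fun i j hij => hchain i j hij a ha) (fun i j hij => hchain' i j hij a ha)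
      (fun i => (hbasic i).apply_mem_zero_one a) (fun i => (hbasic' i).apply_mem_zero_one a)
      (hsum a ha)
  funext i
  exact (hbasic i).eq_of_eqOn hA (hbasic' i) fun a ha => congrFun (hvalue a ha) i

/-- For a bipartite graph `G`, if two `d`-multichains of basic 1-covers in
the poset `P(G)` have the same pointwise sum, then they coincide: the map sending a
`d`-multichain of basic 1-covers to its pointwise sum is injective. -/
theorem multichain_sum_injective {n d : ℕ} (G : SimpleGraph (Fin n))
    (A : Finset (Fin n))
    (hbip : ∀ i j : Fin n, G.Adj i j → (i ∈ A ↔ j ∉ A))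
    (hcard : A.card ≤ Aᶜ.card)
    (hiso : ∀ v : Fin n, ∃ w, G.Adj v w)
    (c c' : Fin d → (Fin n → ℕ))
    (hbasic : ∀ i, IsBasicCover G 1 (c i)) (hbasic' : ∀ i, IsBasicCover G 1 (c' i))
    (hchain : ∀ i j : Fin d, i ≤ j → pLe A (c i) (c j))
    (hchain' : ∀ i j : Fin d, i ≤ j → pLe A (c' i) (c' j))
    (hsum : (fun v => ∑ i, c i v) = fun v => ∑ i, c' i v) :
    c = c' := by
  have hA : G.IsVertexCover A := fun i j hij => or_iff_not_imp_right.2 (hbip i j hij).2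
  exact multichain_sum_injective_general hA hbasic hbasic' hchain hchain' fun a _ => congrFun hsum a
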